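/- Let T1 and T2 be square matrices over ℚ, let r and s be positive integers, and set d = gcd(r,s). For every positive integer N, d · C(N, T1^{s/d} ⊗ T2^{r/d}) = ∑ gcd(r·p, s·q) · C(p,T1) · C(q,T2), where the sum runs over all pairs of positive integers (p,q) satisfying p·q·d = N·gcd(p·r, q·s), and T1 ⊗ T2 denotes the Kronecker product. -/

import Mathlib

open Kronecker

/-- `C(N,T) = (1/N) ∑_{g ∣ N} μ(g) · Tr(T^{N/g})` for a square matrix `T` over `ℚ`. -/
def cycleCount {α : Type*} [Fintype α] [DecidableEq α]
    (T : Matrix α α ℚ) (N : ℕ) : ℚ :=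
  (∑ g ∈ N.divisors, (ArithmeticFunction.moebius g : ℚ) *
    Matrix.trace (T ^ (N / g))) / N

/-!
By Möbius inversion, `C(·, T)` is the only function with `∑_{k ∣ N} k · C(k, T) = Tr(T^N)`. For
coprime `a` and `b`,
`Tr((T1^a ⊗ T2^b)^N) = Tr(T1^{aN}) · Tr(T2^{bN}) = ∑_{p ∣ aN, q ∣ bN} p C(p, T1) · q C(q, T2)`.
The translation by `(a, b)` splits `ℤ/p × ℤ/q` into `gcd(pb, qa)` orbits of length
`pq / gcd(pb, qa)`, and this length divides `N` exactly when `p ∣ aN` and `q ∣ bN`. Grouping the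
pairs `(p, q)` by orbit length thus turns the last sum into a sum over the divisors of `N`.
Arbitrary `r = bd` and `s = ad` with `d = gcd(r, s)` reduce to this case, as `gcd(pr, qs)` is
`d · gcd(pb, qa)`.
-/

section OrbitLength

/-- The common length of the orbits of the translation by `(a, b)` on `ℤ/p × ℤ/q`, by which pairs of
divisors are grouped. The formula is the orbit length only for coprime `a` and `b`; the division is
then exact. -/
def orbitLength (a b p q : ℕ) : ℕ := p * q / Nat.gcd (p * b) (q * a)

/-- The pairs `(p, q)` of positive integers with `orbitLength a b p q = N`, the index set of the
relation for coprime `a` and `b`. The divisor conditions only make the set visibly finite, see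
`mem_orbitPairs`. -/
def orbitPairs (a b N : ℕ) : Finset (ℕ × ℕ) :=
  {x ∈ (a * N).divisors ×ˢ (b * N).divisors | orbitLength a b x.1 x.2 = N}

variable {a b p q N : ℕ}

theorem gcd_mul_mul_dvd_mul (hab : a.Coprime b) (p q : ℕ) :
    Nat.gcd (p * b) (q * a) ∣ p * q := by
  have h : Nat.gcd (p * b) (q * a) ∣ Nat.gcd (p * q * b) (p * q * a) :=
    Nat.dvd_gcd ((Nat.gcd_dvd_left _ _).trans ⟨q, by ring⟩)
      ((Nat.gcd_dvd_right _ _).trans ⟨p, by ring⟩)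
  rwa [Nat.gcd_mul_left, hab.symm.gcd_eq_one, mul_one] at h

theorem gcd_mul_mul_pos (hab : a.Coprime b) (hp : 0 < p) (hq : 0 < q) :
    0 < Nat.gcd (p * b) (q * a) :=
  Nat.pos_of_dvd_of_pos (gcd_mul_mul_dvd_mul hab p q) (Nat.mul_pos hp hq)

theorem orbitLength_eq_iff (hab : a.Coprime b) (hp : 0 < p) (hq : 0 < q) :
    orbitLength a b p q = N ↔ p * q = N * Nat.gcd (p * b) (q * a) :=
  Nat.div_eq_iff_eq_mul_left (gcd_mul_mul_pos hab hp hq) (gcd_mul_mul_dvd_mul hab p q)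

theorem orbitLength_dvd_iff (hab : a.Coprime b) (hp : 0 < p) (hq : 0 < q) :
    orbitLength a b p q ∣ N ↔ p ∣ a * N ∧ q ∣ b * N := by
  calc orbitLength a b p q ∣ N
      ↔ p * q ∣ Nat.gcd (p * b) (q * a) * N :=
        Nat.div_dvd_iff_dvd_mul (gcd_mul_mul_dvd_mul hab p q) (gcd_mul_mul_pos hab hp hq)
    _ ↔ p * q ∣ p * (b * N) ∧ p * q ∣ (a * N) * q := by
        rw [← Nat.gcd_mul_right, Nat.dvd_gcd_iff, mul_assoc, mul_assoc, mul_comm q]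
    _ ↔ p ∣ a * N ∧ q ∣ b * N := by
        rw [Nat.mul_dvd_mul_iff_left hp, Nat.mul_dvd_mul_iff_right hq, and_comm]

theorem mem_divisors_product_divisors_iff (hab : a.Coprime b) (ha : 0 < a) (hb : 0 < b)
    (hN : 0 < N) {x : ℕ × ℕ} :
    x ∈ (a * N).divisors ×ˢ (b * N).divisors ↔
      0 < x.1 ∧ 0 < x.2 ∧ orbitLength a b x.1 x.2 ∣ N := by
  have haN : a * N ≠ 0 := by positivity
  have hbN : b * N ≠ 0 := by positivity
  rw [Finset.mem_product]
  constructor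
  · rintro ⟨hp, hq⟩
    have hp₀ := Nat.pos_of_mem_divisors hp
    have hq₀ := Nat.pos_of_mem_divisors hq
    exact ⟨hp₀, hq₀, (orbitLength_dvd_iff hab hp₀ hq₀).2
      ⟨Nat.dvd_of_mem_divisors hp, Nat.dvd_of_mem_divisors hq⟩⟩
  · rintro ⟨hp₀, hq₀, h⟩
    obtain ⟨hp, hq⟩ := (orbitLength_dvd_iff hab hp₀ hq₀).1 h
    exact ⟨Nat.mem_divisors.2 ⟨hp, haN⟩, Nat.mem_divisors.2 ⟨hq, hbN⟩⟩

theorem mem_orbitPairs (hab : a.Coprime b) (ha : 0 < a) (hb : 0 < b) (hN : 0 < N) {x : ℕ × ℕ} :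
    x ∈ orbitPairs a b N ↔ 0 < x.1 ∧ 0 < x.2 ∧ orbitLength a b x.1 x.2 = N := by
  rw [orbitPairs, Finset.mem_filter, mem_divisors_product_divisors_iff hab ha hb hN]
  constructor
  · rintro ⟨⟨hp, hq, -⟩, h⟩
    exact ⟨hp, hq, h⟩
  · rintro ⟨hp, hq, h⟩
    exact ⟨⟨hp, hq, h.dvd⟩, h⟩

theorem sum_divisors_sum_orbitPairs {M : Type*} [AddCommMonoid M] (hab : a.Coprime b)
    (ha : 0 < a) (hb : 0 < b) (hN : 0 < N) (F : ℕ × ℕ → M) :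
    ∑ k ∈ N.divisors, ∑ x ∈ orbitPairs a b k, F x =
      ∑ x ∈ (a * N).divisors ×ˢ (b * N).divisors, F x := by
  have length_mem : ∀ x ∈ (a * N).divisors ×ˢ (b * N).divisors,
      orbitLength a b x.1 x.2 ∈ N.divisors := fun x hx =>
    Nat.mem_divisors.2 ⟨((mem_divisors_product_divisors_iff hab ha hb hN).1 hx).2.2, hN.ne'⟩
  rw [← Finset.sum_fiberwise_of_maps_to length_mem]
  refine Finset.sum_congr rfl fun k hk => Finset.sum_congr ?_ fun _ _ => rfl
  ext x
  rw [mem_orbitPairs hab ha hb (Nat.pos_of_mem_divisors hk), Finset.mem_filter,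
    mem_divisors_product_divisors_iff hab ha hb hN]
  constructor
  · rintro ⟨hp, hq, rfl⟩
    exact ⟨⟨hp, hq, Nat.dvd_of_mem_divisors hk⟩, rfl⟩
  · rintro ⟨⟨hp, hq, -⟩, h⟩
    exact ⟨hp, hq, h⟩

theorem filter_Icc_product_Icc_eq_orbitPairs {d : ℕ} (hab : a.Coprime b) (ha : 0 < a) (hb : 0 < b)
    (hd : 0 < d) (hN : 0 < N) :
    (Finset.Icc 1 (N * (a * d)) ×ˢ Finset.Icc 1 (N * (b * d))).filter
        (fun x => x.1 * x.2 * d = N * Nat.gcd (x.1 * (b * d)) (x.2 * (a * d))) =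
      orbitPairs a b N := by
  have relation_iff {p q : ℕ} (hp : 0 < p) (hq : 0 < q) :
      p * q * d = N * Nat.gcd (p * (b * d)) (q * (a * d)) ↔ orbitLength a b p q = N := by
    rw [orbitLength_eq_iff hab hp hq, ← mul_assoc p, ← mul_assoc q, Nat.gcd_mul_right, ← mul_assoc,
      Nat.mul_left_inj hd.ne']
  have le_of_dvd_mul {p c : ℕ} (hc : 0 < c) (h : p ∣ c * N) : p ≤ N * (c * d) :=
    Nat.le_of_dvd (by positivity) (h.trans ⟨d, by ring⟩)
  ext ⟨p, q⟩
  simp only [Finset.mem_filter, Finset.mem_product, Finset.mem_Icc, mem_orbitPairs hab ha hb hN]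
  constructor
  · rintro ⟨⟨⟨hp, -⟩, hq, -⟩, h⟩
    exact ⟨hp, hq, (relation_iff hp hq).1 h⟩
  · rintro ⟨hp, hq, h⟩
    obtain ⟨hpa, hqb⟩ := (orbitLength_dvd_iff hab hp hq).1 h.dvd
    exact ⟨⟨⟨hp, le_of_dvd_mul ha hpa⟩, hq, le_of_dvd_mul hb hqb⟩, (relation_iff hp hq).2 h⟩

end OrbitLength

theorem kronecker_pow {R α β : Type*} [CommSemiring R] [Fintype α] [DecidableEq α] [Fintype β]
    [DecidableEq β] (A : Matrix α α R) (B : Matrix β β R) (k : ℕ) :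
    (A ⊗ₖ B) ^ k = (A ^ k) ⊗ₖ (B ^ k) := by
  induction k with
  | zero => simp
  | succ k ih => rw [pow_succ, pow_succ, pow_succ, ih, Matrix.mul_kronecker_mul]

section CycleCount

variable {α β : Type*} [Fintype α] [DecidableEq α] [Fintype β] [DecidableEq β]

theorem sum_divisors_mul_eq_trace_pow_iff (T : Matrix α α ℚ) (f : ℕ → ℚ) :
    (∀ N > 0, ∑ k ∈ N.divisors, k * f k = Matrix.trace (T ^ N)) ↔
      ∀ N > 0, cycleCount T N = f N := by
  rw [ArithmeticFunction.sum_eq_iff_sum_mul_moebius_eq]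
  refine forall₂_congr fun N hN => ?_
  have hN₀ : (N : ℚ) ≠ 0 := by positivity
  rw [cycleCount, div_eq_iff hN₀, mul_comm (f N), Nat.sum_divisorsAntidiagonal
    (fun g k => (ArithmeticFunction.moebius g : ℚ) * Matrix.trace (T ^ k))]

theorem sum_divisors_mul_cycleCount (T : Matrix α α ℚ) {N : ℕ} (hN : 0 < N) :
    ∑ k ∈ N.divisors, k * cycleCount T k = Matrix.trace (T ^ N) :=
  (sum_divisors_mul_eq_trace_pow_iff T (cycleCount T)).2 (fun _ _ => rfl) N hN

theorem trace_kronecker_pow_pow (A : Matrix α α ℚ) (B : Matrix β β ℚ) {a b N : ℕ} (ha : 0 < a)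
    (hb : 0 < b) (hN : 0 < N) :
    Matrix.trace (((A ^ a) ⊗ₖ (B ^ b)) ^ N) =
      ∑ x ∈ (a * N).divisors ×ˢ (b * N).divisors,
        (x.1 * cycleCount A x.1) * (x.2 * cycleCount B x.2) := by
  rw [kronecker_pow, Matrix.trace_kronecker, ← pow_mul, ← pow_mul,
    ← sum_divisors_mul_cycleCount A (Nat.mul_pos ha hN),
    ← sum_divisors_mul_cycleCount B (Nat.mul_pos hb hN), Finset.sum_mul_sum, Finset.sum_product]

theorem cycleCount_kronecker_pow_of_coprime (A : Matrix α α ℚ) (B : Matrix β β ℚ) {a b N : ℕ}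
    (hab : a.Coprime b) (ha : 0 < a) (hb : 0 < b) (hN : 0 < N) :
    cycleCount ((A ^ a) ⊗ₖ (B ^ b)) N =
      ∑ x ∈ orbitPairs a b N,
        (Nat.gcd (x.1 * b) (x.2 * a) : ℚ) * cycleCount A x.1 * cycleCount B x.2 := by
  refine (sum_divisors_mul_eq_trace_pow_iff _ fun N => ∑ x ∈ orbitPairs a b N,
    (Nat.gcd (x.1 * b) (x.2 * a) : ℚ) * cycleCount A x.1 * cycleCount B x.2).1 (fun N hN => ?_) N hN
  rw [trace_kronecker_pow_pow A B ha hb hN, ← sum_divisors_sum_orbitPairs hab ha hb hN]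
  refine Finset.sum_congr rfl fun k hk => ?_
  rw [Finset.mul_sum]
  refine Finset.sum_congr rfl fun x hx => ?_
  obtain ⟨hp, hq, hlength⟩ := (mem_orbitPairs hab ha hb (Nat.pos_of_mem_divisors hk)).1 hx
  have orbit_count : (x.1 * x.2 : ℚ) = k * (Nat.gcd (x.1 * b) (x.2 * a) : ℕ) := by
    exact_mod_cast (orbitLength_eq_iff hab hp hq).1 hlength
  linear_combination -(cycleCount A x.1 * cycleCount B x.2) * orbit_count

theorem carlitz_relation_cycleCount_powers_general (T1 : Matrix α α ℚ) (T2 : Matrix β β ℚ)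
    {r s N : ℕ} (hr : 0 < r) (hs : 0 < s) (hN : 0 < N) :
    (Nat.gcd r s : ℚ) *
        cycleCount ((T1 ^ (s / Nat.gcd r s)) ⊗ₖ (T2 ^ (r / Nat.gcd r s))) N =
      ∑ p ∈ (Finset.Icc 1 (N * s) ×ˢ Finset.Icc 1 (N * r)).filter
          (fun p => p.1 * p.2 * Nat.gcd r s = N * Nat.gcd (p.1 * r) (p.2 * s)),
        (Nat.gcd (r * p.1) (s * p.2) : ℚ) *
          cycleCount T1 p.1 * cycleCount T2 p.2 := by
  obtain ⟨b, a, hba, hr_eq, hs_eq⟩ := Nat.exists_coprime r s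
  have hd : 0 < Nat.gcd r s := Nat.gcd_pos_of_pos_left s hr
  generalize Nat.gcd r s = d at hr_eq hs_eq hd ⊢
  subst hr_eq hs_eq
  have ha : 0 < a := Nat.pos_of_mul_pos_right hs
  have hb : 0 < b := Nat.pos_of_mul_pos_right hr
  have gcd_eq (p q : ℕ) : Nat.gcd (b * d * p) (a * d * q) = d * Nat.gcd (p * b) (q * a) := by
    rw [← Nat.gcd_mul_left]
    congr 1 <;> ring
  rw [Nat.mul_div_cancel _ hd, Nat.mul_div_cancel _ hd,
    filter_Icc_product_Icc_eq_orbitPairs hba.symm ha hb hd hN,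
    cycleCount_kronecker_pow_of_coprime T1 T2 hba.symm ha hb hN, Finset.mul_sum]
  refine Finset.sum_congr rfl fun x _ => ?_
  rw [gcd_eq, Nat.cast_mul, mul_assoc, mul_assoc, mul_assoc]

end CycleCount

theorem carlitz_relation_cycleCount_powers
    (m n : ℕ) (T1 : Matrix (Fin m) (Fin m) ℚ) (T2 : Matrix (Fin n) (Fin n) ℚ)
    (r s : ℕ) (hr : 0 < r) (hs : 0 < s) (N : ℕ) (hN : 0 < N) :
    (Nat.gcd r s : ℚ) *
        cycleCount ((T1 ^ (s / Nat.gcd r s)) ⊗ₖ (T2 ^ (r / Nat.gcd r s))) N =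
      ∑ p ∈ (Finset.Icc 1 (N * s) ×ˢ Finset.Icc 1 (N * r)).filter
          (fun p => p.1 * p.2 * Nat.gcd r s = N * Nat.gcd (p.1 * r) (p.2 * s)),
        (Nat.gcd (r * p.1) (s * p.2) : ℚ) *
          cycleCount T1 p.1 * cycleCount T2 p.2 :=
  carlitz_relation_cycleCount_powers_general T1 T2 hr hs hN
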